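/- Let α, β, γ ∈ ℂ with none of α, β, γ a nonpositive integer, let δ, w ∈ ℂ, and let k ∈ (0,1). Define f_{m,n} as in the context, with the conventions f_{−1,ℓ} := 0 and f_{m,n} := 0 for m > n. Then for every n ≥ 1 and every m with 0 ≤ m ≤ n+1: −( f_{m,n}/k² − f_{m,n−1} ) + ( (n+α)(n+β) / (n(n+γ−1)) )·( f_{m,n+1}/k² − f_{m,n} ) = −( (w − (1−k²)δ·n) / (k²·n·(γ+n−1)) )·f_{m−1,n}. -/

import Mathlib

/-- The Pochhammer symbol `(x)_n = x(x+1)⋯(x+n-1)`. -/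
noncomputable def poch (x : ℂ) (n : ℕ) : ℂ := ∏ i ∈ Finset.range n, (x + (i : ℂ))

/-- The index set of tuples `(ℓ_1, j_1, …, ℓ_m, j_m)` with
`0 ≤ ℓ_1 ≤ j_1 < ℓ_2 ≤ j_2 < ⋯ < ℓ_m ≤ j_m < n`, encoded as pairs of functions
`(ℓ, j) : (Fin m → Fin n) × (Fin m → Fin n)`. -/
def heunIdx (m n : ℕ) : Finset ((Fin m → Fin n) × (Fin m → Fin n)) :=
  Finset.univ.filter fun p =>
    (∀ s : Fin m, (p.1 s : ℕ) ≤ (p.2 s : ℕ)) ∧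
    (∀ s t : Fin m, (s : ℕ) + 1 = (t : ℕ) → (p.2 s : ℕ) < (p.1 t : ℕ))

/-- The coefficients `f_{m,n}`: `f_{0,n} = k^{2n}`; for `1 ≤ m ≤ n`,
`f_{m,n} = (-1)^m k^{2n-2m} Σ ∏_{s=1}^m [j_s!(γ)_{j_s}(α)_{ℓ_s}(β)_{ℓ_s} /
(ℓ_s!(γ)_{ℓ_s}(α)_{j_s+1}(β)_{j_s+1})] k^{-2(j_s-ℓ_s)} (w - (1-k²)δℓ_s)`,
the sum running over `heunIdx m n`; and `f_{m,n} = 0` for `m < 0` or `m > n`. -/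
noncomputable def heunf (k : ℝ) (α β γ δ w : ℂ) (m : ℤ) (n : ℕ) : ℂ :=
  if m = 0 then (k : ℂ) ^ (2 * n)
  else if m < 0 ∨ (n : ℤ) < m then 0
  else (-1 : ℂ) ^ m.toNat * (k : ℂ) ^ (2 * (n : ℤ) - 2 * m) *
    ∑ p ∈ heunIdx m.toNat n, ∏ s : Fin m.toNat,
      ((Nat.factorial (p.2 s : ℕ) : ℂ) * poch γ (p.2 s : ℕ) * poch α (p.1 s : ℕ) *
          poch β (p.1 s : ℕ)) /
        ((Nat.factorial (p.1 s : ℕ) : ℂ) * poch γ (p.1 s : ℕ) * poch α ((p.2 s : ℕ) + 1) *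
          poch β ((p.2 s : ℕ) + 1)) *
      (k : ℂ) ^ (-(2 : ℤ) * (((p.2 s : ℕ) : ℤ) - ((p.1 s : ℕ) : ℤ))) *
      (w - (1 - (k : ℂ) ^ 2) * δ * ((p.1 s : ℕ) : ℂ))

/-- The Taylor coefficients `c_n = ((α)_n (β)_n / (n! (γ)_n)) Σ_{m=0}^n f_{m,n}`
of the local Heun solution. -/
noncomputable def heunc (k : ℝ) (α β γ δ w : ℂ) (n : ℕ) : ℂ :=
  poch α n * poch β n / ((Nat.factorial n : ℂ) * poch γ n) *
    ∑ m ∈ Finset.range (n + 1), heunf k α β γ δ w (m : ℤ) n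

/-!
Splitting off the last pair `(ℓ_{m+1}, j_{m+1}) = (l, j)` of a chain leaves a chain of length `m`
below `l`, so the increment of the chain sum from `n` to `n + 1` collects exactly the chains with
last entry `j = n`. The weight of a pair `(l, j)` is hypergeometric in `j`: passing from `j` to
`j + 1` multiplies it by a ratio not depending on `l`. Two consecutive increments are therefore
proportional, up to the chains ending in the new diagonal pair `(n + 1, n + 1)`, which produce the
term `f_{m-1,n}`.
-/

open Finset

section ChainSum

/-- The index set `heunIdx m n` with its entries read as natural numbers, which makes chains with
different upper bounds `n` comparable. -/
def interlacingChains (m n : ℕ) : Finset ((Fin m → ℕ) × (Fin m → ℕ)) :=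
  (heunIdx m n).map (Fin.valEmbedding.arrowCongrRight.prodMap Fin.valEmbedding.arrowCongrRight)

theorem mem_interlacingChains {m n : ℕ} {l j : Fin m → ℕ} :
    (l, j) ∈ interlacingChains m n ↔
      (∀ s, l s ≤ j s) ∧ (∀ s t : Fin m, (s : ℕ) + 1 = t → j s < l t) ∧ ∀ s, j s < n := by
  simp only [interlacingChains, heunIdx, mem_map, mem_filter, mem_univ, true_and]
  constructor
  · rintro ⟨p, ⟨hle, hlt⟩, hp⟩
    obtain ⟨rfl, rfl⟩ := Prod.mk.inj hp
    exact ⟨hle, hlt, fun s => (p.2 s).isLt⟩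
  · rintro ⟨hle, hlt, hn⟩
    exact ⟨(fun s => ⟨l s, (hle s).trans_lt (hn s)⟩, fun s => ⟨j s, hn s⟩), ⟨hle, hlt⟩, rfl⟩

theorem lt_of_consecutive_lt {m : ℕ} {l j : Fin m → ℕ} (hle : ∀ s, l s ≤ j s)
    (hlt : ∀ s t : Fin m, (s : ℕ) + 1 = t → j s < l t) {s t : Fin m} (hst : s < t) :
    j s < l t := by
  obtain ⟨t, ht⟩ := t
  induction t with
  | zero => exact absurd hst (Nat.not_lt_zero _)
  | succ t ih =>
    have hstep : j ⟨t, by omega⟩ < l ⟨t + 1, ht⟩ := hlt _ _ rfl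
    rcases Nat.lt_succ_iff_lt_or_eq.1 hst with h | h
    · exact ((ih _ h).trans_le (hle _)).trans hstep
    · exact hlt _ _ (congrArg (· + 1) h)

theorem snoc_mem_interlacingChains {m n a b : ℕ} {l j : Fin m → ℕ} :
    ((Fin.snoc l a : Fin (m + 1) → ℕ), (Fin.snoc j b : Fin (m + 1) → ℕ)) ∈
        interlacingChains (m + 1) n ↔
      (l, j) ∈ interlacingChains m a ∧ a ≤ b ∧ b < n := by
  constructor
  · intro h
    obtain ⟨hle, hlt, hn⟩ := mem_interlacingChains.1 h
    have hlast (s : Fin m) : j s < a := by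
      simpa using lt_of_consecutive_lt hle hlt (Fin.castSucc_lt_last s)
    refine ⟨mem_interlacingChains.2 ⟨fun s => ?_, fun s t hst => ?_, hlast⟩, ?_, ?_⟩
    · simpa using hle s.castSucc
    · simpa using hlt s.castSucc t.castSucc hst
    · simpa using hle (Fin.last m)
    · simpa using hn (Fin.last m)
  · rintro ⟨h, hab, hbn⟩
    obtain ⟨hle, hlt, ha⟩ := mem_interlacingChains.1 h
    have hsucc_ne (t : Fin (m + 1)) : m + 1 ≠ t := t.isLt.ne'
    simp only [mem_interlacingChains, Fin.forall_fin_succ', Fin.snoc_castSucc, Fin.snoc_last,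
      Fin.val_castSucc, Fin.val_last]
    exact ⟨⟨hle, hab⟩, ⟨fun s => ⟨hlt s, fun _ => ha s⟩,
      fun t ht => absurd ht (hsucc_ne t.castSucc), fun h => absurd h (hsucc_ne (Fin.last m))⟩,
      fun s => (ha s).trans_le (hab.trans hbn.le), hbn⟩

variable {R : Type*}

/-- The sum `Σ ∏_{s=1}^m g(ℓ_s, j_s)` over all chains
`0 ≤ ℓ_1 ≤ j_1 < ℓ_2 ≤ j_2 < ⋯ < ℓ_m ≤ j_m < n`, for an arbitrary weight `g`. -/
def chainSum [CommSemiring R] (g : ℕ → ℕ → R) (m n : ℕ) : R :=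
  ∑ p ∈ heunIdx m n, ∏ s, g (p.1 s) (p.2 s)

section CommSemiring

variable [CommSemiring R] (g : ℕ → ℕ → R)

theorem chainSum_eq_sum_interlacingChains (m n : ℕ) :
    chainSum g m n = ∑ q ∈ interlacingChains m n, ∏ s, g (q.1 s) (q.2 s) := by
  rw [interlacingChains, sum_map]
  rfl

@[simp]
theorem chainSum_zero_left (n : ℕ) : chainSum g 0 n = 1 := by
  simp [chainSum, heunIdx]

theorem chainSum_succ_left (m n : ℕ) :
    chainSum g (m + 1) n = ∑ j ∈ range n, ∑ l ∈ range (j + 1), g l j * chainSum g m l := by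
  simp only [chainSum_eq_sum_interlacingChains, mul_sum, sum_sigma']
  symm
  refine sum_bij'
    (fun x _ => ((Fin.snoc x.2.2.1 x.2.1 : Fin (m + 1) → ℕ),
      (Fin.snoc x.2.2.2 x.1 : Fin (m + 1) → ℕ)))
    (fun q _ => ⟨q.2 (Fin.last m), q.1 (Fin.last m), (Fin.init q.1, Fin.init q.2)⟩)
    ?_ ?_ ?_ ?_ ?_
  · rintro ⟨j, l, q⟩ hx
    simp only [mem_sigma, mem_range, Nat.lt_succ_iff] at hx
    exact snoc_mem_interlacingChains.2 ⟨hx.2.2, hx.2.1, hx.1⟩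
  · rintro ⟨l, j⟩ hq
    rw [← Fin.snoc_init_self l, ← Fin.snoc_init_self j, snoc_mem_interlacingChains] at hq
    simpa only [mem_sigma, mem_range, Nat.lt_succ_iff] using ⟨hq.2.2, hq.2.1, hq.1⟩
  · simp
  · simp
  · rintro ⟨j, l, q⟩ -
    simp only [Fin.prod_univ_castSucc, Fin.snoc_castSucc, Fin.snoc_last, mul_comm]

theorem chainSum_eq_zero_of_lt {m n : ℕ} (h : n < m) : chainSum g m n = 0 := by
  induction m generalizing n with
  | zero => exact absurd h n.not_lt_zero
  | succ m ih =>
    rw [chainSum_succ_left]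
    refine sum_eq_zero fun j hj => sum_eq_zero fun l hl => ?_
    rw [mem_range] at hj hl
    rw [ih (by omega), mul_zero]

end CommSemiring

variable [CommRing R] (g : ℕ → ℕ → R)

theorem chainSum_succ_succ_sub (m n : ℕ) :
    chainSum g (m + 1) (n + 1) - chainSum g (m + 1) n =
      ∑ l ∈ range (n + 1), g l n * chainSum g m l := by
  rw [chainSum_succ_left, chainSum_succ_left, sum_range_succ_sub_sum]

theorem mul_chainSum_sub_of_mul_eq_mul {g : ℕ → ℕ → R} {a b : R} {n : ℕ}
    (h : ∀ l ≤ n, a * g l (n + 1) = b * g l n) (m : ℕ) :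
    a * (chainSum g (m + 1) (n + 2) - chainSum g (m + 1) (n + 1)) =
      b * (chainSum g (m + 1) (n + 1) - chainSum g (m + 1) n) +
        a * g (n + 1) (n + 1) * chainSum g m (n + 1) := by
  rw [chainSum_succ_succ_sub, chainSum_succ_succ_sub, sum_range_succ, mul_add, mul_sum, mul_sum,
    mul_assoc]
  congr 1
  refine sum_congr rfl fun l hl => ?_
  rw [← mul_assoc, h l (Nat.lt_succ_iff.1 (mem_range.1 hl)), mul_assoc]

end ChainSum

theorem poch_succ (x : ℂ) (n : ℕ) : poch x (n + 1) = poch x n * (x + n) :=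
  prod_range_succ _ _

theorem add_natCast_ne_zero {x : ℂ} (hx : ∀ j : ℕ, x ≠ -(j : ℂ)) (n : ℕ) : x + n ≠ 0 :=
  fun h => hx n (eq_neg_of_add_eq_zero_left h)

theorem poch_ne_zero {x : ℂ} (hx : ∀ j : ℕ, x ≠ -(j : ℂ)) (n : ℕ) : poch x n ≠ 0 :=
  prod_ne_zero_iff.2 fun i _ => add_natCast_ne_zero hx i

/-- The factor contributed by a pair `(ℓ_s, j_s) = (l, j)` to the sum defining `f_{m,n}`. The
modulus `κ` is allowed to be complex. -/
noncomputable def heunWeight (κ α β γ δ w : ℂ) (l j : ℕ) : ℂ :=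
  ((Nat.factorial j : ℂ) * poch γ j * poch α l * poch β l) /
      ((Nat.factorial l : ℂ) * poch γ l * poch α (j + 1) * poch β (j + 1)) *
    κ ^ (-(2 : ℤ) * ((j : ℤ) - (l : ℤ))) *
    (w - (1 - κ ^ 2) * δ * (l : ℂ))

-- If `α + j + 1` or `β + j + 1` vanishes, both sides are `0` by the convention `x / 0 = 0`.
theorem heunWeight_succ_right {κ : ℂ} (hκ : κ ≠ 0) (α β γ δ w : ℂ) (l j : ℕ) :
    heunWeight κ α β γ δ w l (j + 1) =
      (j + 1 : ℕ) * (γ + j) / (κ ^ 2 * (α + (j + 1 : ℕ)) * (β + (j + 1 : ℕ))) *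
        heunWeight κ α β γ δ w l j := by
  have hpow : κ ^ (-(2 : ℤ) * (((j + 1 : ℕ) : ℤ) - l)) =
      κ ^ (-(2 : ℤ) * ((j : ℤ) - l)) / κ ^ 2 := by
    rw [← zpow_natCast, ← zpow_sub₀ hκ]
    congr 1
    push_cast
    ring
  rw [heunWeight, heunWeight, hpow, poch_succ α (j + 1), poch_succ β (j + 1), poch_succ γ j,
    Nat.factorial_succ, Nat.cast_mul]
  simp only [div_eq_mul_inv, mul_inv]
  ring

theorem heunWeight_self {α β γ : ℂ} (κ δ w : ℂ) {j : ℕ} (hα : poch α (j + 1) ≠ 0)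
    (hβ : poch β (j + 1) ≠ 0) (hγ : poch γ j ≠ 0) :
    (α + j) * (β + j) * heunWeight κ α β γ δ w j j = w - (1 - κ ^ 2) * δ * j := by
  have hfact : (j.factorial : ℂ) ≠ 0 := Nat.cast_ne_zero.2 j.factorial_ne_zero
  rw [poch_succ] at hα hβ
  obtain ⟨hpα, hα'⟩ := mul_ne_zero_iff.1 hα
  obtain ⟨hpβ, hβ'⟩ := mul_ne_zero_iff.1 hβ
  rw [heunWeight, poch_succ, poch_succ, sub_self, mul_zero, zpow_zero]
  field_simp

theorem zpow_two_mul_natCast_succ_sub {G₀ : Type*} [GroupWithZero G₀] {x : G₀} (hx : x ≠ 0)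
    (n : ℕ) (e : ℤ) :
    x ^ (2 * ((n + 1 : ℕ) : ℤ) - e) = x ^ 2 * x ^ (2 * (n : ℤ) - e) := by
  rw [← zpow_natCast, ← zpow_add₀ hx]
  congr 1
  push_cast
  ring

theorem heunf_natCast (k : ℝ) (α β γ δ w : ℂ) (m n : ℕ) :
    heunf k α β γ δ w m n =
      (-1 : ℂ) ^ m * (k : ℂ) ^ (2 * (n : ℤ) - 2 * m) * chainSum (heunWeight k α β γ δ w) m n := by
  unfold heunf
  split_ifs with hm hmn
  · obtain rfl : m = 0 := by exact_mod_cast hm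
    simp only [pow_zero, one_mul, chainSum_zero_left, mul_one, Nat.cast_zero, mul_zero, sub_zero]
    exact_mod_cast rfl
  · rw [chainSum_eq_zero_of_lt _ (by omega), mul_zero]
  · rfl

theorem heunf_succ_div_sq_sub {k : ℝ} (hk : k ≠ 0) (α β γ δ w : ℂ) (m n : ℕ) :
    heunf k α β γ δ w m (n + 1) / (k : ℂ) ^ 2 - heunf k α β γ δ w m n =
      (-1 : ℂ) ^ m * (k : ℂ) ^ (2 * (n : ℤ) - 2 * m) *
        (chainSum (heunWeight k α β γ δ w) m (n + 1) -
          chainSum (heunWeight k α β γ δ w) m n) := by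
  have hk' : (k : ℂ) ≠ 0 := Complex.ofReal_ne_zero.2 hk
  rw [heunf_natCast, heunf_natCast, zpow_two_mul_natCast_succ_sub hk']
  field_simp

theorem mul_heunf_difference {k : ℝ} (hk : k ≠ 0) {α β γ : ℂ} (hα : ∀ j : ℕ, α ≠ -(j : ℂ))
    (hβ : ∀ j : ℕ, β ≠ -(j : ℂ)) (hγ : ∀ j : ℕ, γ ≠ -(j : ℂ)) (δ w : ℂ) (m n : ℕ) :
    (k : ℂ) ^ 2 * (α + (n + 1 : ℕ)) * (β + (n + 1 : ℕ)) *
        (heunf k α β γ δ w (m + 1 : ℕ) (n + 2) / (k : ℂ) ^ 2 -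
          heunf k α β γ δ w (m + 1 : ℕ) (n + 1)) =
      (k : ℂ) ^ 2 * ((n + 1 : ℕ) * (γ + n)) *
        (heunf k α β γ δ w (m + 1 : ℕ) (n + 1) / (k : ℂ) ^ 2 -
          heunf k α β γ δ w (m + 1 : ℕ) n) -
      (w - (1 - (k : ℂ) ^ 2) * δ * (n + 1 : ℕ)) * heunf k α β γ δ w m (n + 1) := by
  have hk' : (k : ℂ) ≠ 0 := Complex.ofReal_ne_zero.2 hk
  have hαn := add_natCast_ne_zero hα (n + 1)
  have hβn := add_natCast_ne_zero hβ (n + 1)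
  have hratio (l : ℕ) (_ : l ≤ n) :
      (k : ℂ) ^ 2 * (α + (n + 1 : ℕ)) * (β + (n + 1 : ℕ)) * heunWeight k α β γ δ w l (n + 1) =
        (n + 1 : ℕ) * (γ + n) * heunWeight k α β γ δ w l n := by
    rw [heunWeight_succ_right hk', ← mul_assoc, mul_div_cancel₀]
    exact mul_ne_zero (mul_ne_zero (pow_ne_zero 2 hk') hαn) hβn
  have hrec := mul_chainSum_sub_of_mul_eq_mul hratio m
  have hdiag := heunWeight_self (k : ℂ) δ w (poch_ne_zero hα (n + 2)) (poch_ne_zero hβ (n + 2))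
    (poch_ne_zero hγ (n + 1))
  have hshift : 2 * (n : ℤ) - 2 * m = 2 * (n + 1 : ℕ) - 2 * (m + 1 : ℕ) := by push_cast; ring
  rw [heunf_succ_div_sq_sub hk, heunf_succ_div_sq_sub hk, heunf_natCast,
    zpow_two_mul_natCast_succ_sub hk' n (2 * m), hshift, zpow_two_mul_natCast_succ_sub hk',
    pow_succ]
  linear_combination
    (-1 : ℂ) ^ (m + 1) * k ^ 2 * (k : ℂ) ^ (2 * (n : ℤ) - 2 * (m + 1 : ℕ)) *
      (hrec + k ^ 2 * chainSum (heunWeight k α β γ δ w) m (n + 1) * hdiag)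

theorem heunf_combined_difference_identity_general (k : ℝ) (hk : k ≠ 0) (α β γ δ w : ℂ)
    (hα : ∀ j : ℕ, α ≠ -(j : ℂ)) (hβ : ∀ j : ℕ, β ≠ -(j : ℂ))
    (hγ : ∀ j : ℕ, γ ≠ -(j : ℂ)) (n : ℕ) (hn : 1 ≤ n) (m : ℕ) :
    -(heunf k α β γ δ w (m : ℤ) n / (k : ℂ) ^ 2 - heunf k α β γ δ w (m : ℤ) (n - 1)) +
        ((n : ℂ) + α) * ((n : ℂ) + β) / ((n : ℂ) * ((n : ℂ) + γ - 1)) *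
          (heunf k α β γ δ w (m : ℤ) (n + 1) / (k : ℂ) ^ 2 - heunf k α β γ δ w (m : ℤ) n) =
      -((w - (1 - (k : ℂ) ^ 2) * δ * (n : ℂ)) /
          ((k : ℂ) ^ 2 * (n : ℂ) * (γ + (n : ℂ) - 1))) *
        heunf k α β γ δ w ((m : ℤ) - 1) n := by
  obtain ⟨n, rfl⟩ := Nat.exists_eq_add_of_le' hn
  rw [Nat.add_sub_cancel]
  rcases m with _ | m
  · have hneg : heunf k α β γ δ w (((0 : ℕ) : ℤ) - 1) (n + 1) = 0 := by simp [heunf]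
    simp only [heunf_succ_div_sq_sub hk, chainSum_zero_left, hneg, sub_self, mul_zero,
      neg_zero, add_zero]
  · have hk' : (k : ℂ) ≠ 0 := Complex.ofReal_ne_zero.2 hk
    have hn' : ((n + 1 : ℕ) : ℂ) ≠ 0 := Nat.cast_ne_zero.2 n.succ_ne_zero
    have hγn : γ + n ≠ 0 := add_natCast_ne_zero hγ n
    have hdiff := mul_heunf_difference hk hα hβ hγ δ w m n
    have hγ_left : ((n + 1 : ℕ) : ℂ) + γ - 1 = γ + n := by push_cast; ring
    have hγ_right : γ + ((n + 1 : ℕ) : ℂ) - 1 = γ + n := by push_cast; ring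
    have hm : ((m + 1 : ℕ) : ℤ) - 1 = m := by push_cast; ring
    rw [hγ_left, hγ_right, hm]
    field_simp at hdiff ⊢
    linear_combination hdiff

/-- The combined difference identity
`-(f_{m,n}/k² - f_{m,n-1}) + ((n+α)(n+β)/(n(n+γ-1)))(f_{m,n+1}/k² - f_{m,n})
= -((w - (1-k²)δn)/(k²n(γ+n-1))) f_{m-1,n}` for `n ≥ 1`, `0 ≤ m ≤ n+1`. -/
theorem heunf_combined_difference_identity (k : ℝ) (hk0 : 0 < k) (hk1 : k < 1)
    (α β γ δ w : ℂ)
    (hα : ∀ j : ℕ, α ≠ -(j : ℂ)) (hβ : ∀ j : ℕ, β ≠ -(j : ℂ))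
    (hγ : ∀ j : ℕ, γ ≠ -(j : ℂ)) :
    ∀ n : ℕ, 1 ≤ n → ∀ m : ℕ, m ≤ n + 1 →
      -(heunf k α β γ δ w (m : ℤ) n / (k : ℂ) ^ 2 - heunf k α β γ δ w (m : ℤ) (n - 1)) +
        ((n : ℂ) + α) * ((n : ℂ) + β) / ((n : ℂ) * ((n : ℂ) + γ - 1)) *
          (heunf k α β γ δ w (m : ℤ) (n + 1) / (k : ℂ) ^ 2 - heunf k α β γ δ w (m : ℤ) n) =
      -((w - (1 - (k : ℂ) ^ 2) * δ * (n : ℂ)) /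
          ((k : ℂ) ^ 2 * (n : ℂ) * (γ + (n : ℂ) - 1))) *
        heunf k α β γ δ w ((m : ℤ) - 1) n :=
  fun n hn m _ =>
    heunf_combined_difference_identity_general k hk0.ne' α β γ δ w hα hβ hγ n hn m
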